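/- Let X ∼ CN(0, P̄ I_{M_T}) be a circularly symmetric complex Gaussian vector in C^{M_T}, A ∈ C^{M_R×M_T}, and K₁, K₂ > 0. Then with n = M_T − 1, E[ (‖AX‖² + K₁)/(‖X‖² + K₂) ] = ‖A‖_F²/(n+1) + ( K₁/K₂ − ‖A‖_F²/(n+1) ) · (K₂/P̄)^{n+1} · exp(K₂/P̄) · Γ(−n, K₂/P̄), where Γ(−n, t) = ∫_t^∞ u^{−n−1} e^{−u} du and ‖A‖_F is the Frobenius norm. -/

import Mathlib

open Real
open MeasureTheory

lemma aux_int_exp {M : ℕ} {c : ℝ} (hc : 0 < c) :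
    Integrable (fun x : Fin M → ℂ => Real.exp (-c * ∑ j, Complex.normSq (x j))) := by
  have h1 : Integrable (fun z : ℂ => Real.exp (-c * ‖z‖ ^ 2)) := by
    have := GaussianFourier.integral_rexp_neg_mul_sq_norm (V := ℂ) hc
    refine Integrable.of_integral_ne_zero ?_
    rw [this]
    positivity
  have h2 := Integrable.fintype_prod (ι := Fin M) (f := fun _ z => Real.exp (-c * ‖z‖ ^ 2))
    (μ := fun _ => (volume : Measure ℂ)) (fun _ => h1)
  refine h2.congr (Filter.Eventually.of_forall fun x => ?_)
  simp only [← Real.exp_sum, Complex.normSq_eq_norm_sq, Finset.mul_sum]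

lemma aux_val_exp {M : ℕ} {c : ℝ} (hc : 0 < c) :
    ∫ x : Fin M → ℂ, Real.exp (-c * ∑ j, Complex.normSq (x j)) = (Real.pi / c) ^ M := by
  have h1 := GaussianFourier.integral_rexp_neg_mul_sq_norm (V := ℂ) hc
  have h2 := integral_fintype_prod_volume_eq_pow (ι := Fin M) (fun z : ℂ => Real.exp (-c * ‖z‖ ^ 2))
  rw [h1] at h2
  simp only [Complex.finrank_real_complex, Fintype.card_fin] at h2
  norm_num at h2
  rw [← h2]
  congr 1
  ext x
  simp only [← Real.exp_sum, Complex.normSq_eq_norm_sq, Finset.mul_sum, neg_mul]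

lemma aux_inv {c : ℝ} (hc : 0 < c) : ∫ s in Set.Ioi (0:ℝ), Real.exp (-c * s) = c⁻¹ := by
  have := integral_exp_mul_Ioi (a := -c) (by linarith) 0
  simp at this
  simpa using this

lemma aux_R_nonneg {M : ℕ} (x : Fin M → ℂ) : 0 ≤ ∑ j, Complex.normSq (x j) :=
  Finset.sum_nonneg fun _ _ => Complex.normSq_nonneg _

lemma aux_I0 {M : ℕ} {P K : ℝ} (hP : 0 < P) (hK : 0 < K) :
    ∫ x : Fin M → ℂ, Real.exp (-(∑ j, Complex.normSq (x j)) / P) /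
        ((∑ j, Complex.normSq (x j)) + K) =
      ∫ s in Set.Ioi (0:ℝ), Real.exp (-K * s) * (Real.pi / (P⁻¹ + s)) ^ M := by
  have e1 : ∀ x : Fin M → ℂ, Real.exp (-(∑ j, Complex.normSq (x j)) / P) /
        ((∑ j, Complex.normSq (x j)) + K) = ∫ s in Set.Ioi (0:ℝ),
        Real.exp (-K * s) * Real.exp (-(P⁻¹ + s) * ∑ j, Complex.normSq (x j)) := by
    intro x
    have hR := aux_R_nonneg x
    rw [div_eq_mul_inv, ← aux_inv (c := (∑ j, Complex.normSq (x j)) + K) (by positivity),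
      ← integral_const_mul]
    congr 1
    ext s
    rw [← Real.exp_add, ← Real.exp_add]
    congr 1
    ring
  simp_rw [e1]
  rw [integral_integral_swap]
  · refine setIntegral_congr_fun measurableSet_Ioi fun s hs => ?_
    have hs' : 0 < s := hs
    rw [integral_const_mul, aux_val_exp (by positivity)]
  · have hs : IntegrableOn (fun s : ℝ => Real.exp (-K * s)) (Set.Ioi 0) :=
      exp_neg_integrableOn_Ioi 0 hK
    have hd := (aux_int_exp (M := M) (c := P⁻¹) (by positivity)).mul_prod hs
    refine hd.mono' ?_ ?_
    · apply Continuous.aestronglyMeasurable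
      have : Continuous Complex.normSq := Complex.continuous_normSq
      simp only [Function.uncurry_def]
      fun_prop
    · have : ∀ᵐ p : (Fin M → ℂ) × ℝ ∂(volume.prod (volume.restrict (Set.Ioi (0:ℝ)))),
          p.2 ∈ Set.Ioi (0:ℝ) :=
        Measure.quasiMeasurePreserving_snd.ae (ae_restrict_mem measurableSet_Ioi)
      filter_upwards [this] with p hp
      have hp' : 0 < p.2 := hp
      have hR := aux_R_nonneg p.1
      simp only [Function.uncurry_def, Real.norm_eq_abs]
      rw [abs_of_nonneg (by positivity), mul_comm]
      gcongr
      nlinarith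

lemma aux_subst {M : ℕ} {P K : ℝ} (hP : 0 < P) (hK : 0 < K) :
    ∫ s in Set.Ioi (0:ℝ), Real.exp (-K * s) * (Real.pi / (P⁻¹ + s)) ^ M =
      (Real.pi * P) ^ M * (K⁻¹ * ((K / P) ^ M * Real.exp (K / P) *
        ∫ u in Set.Ioi (K / P), u ^ (-(M : ℝ)) * Real.exp (-u))) := by
  have h1 := integral_comp_mul_left_Ioi
    (fun u : ℝ => (u + K / P) ^ (-(M : ℝ)) * Real.exp (-(u + K / P))) 0 hK
  have h2 := (measurePreserving_add_right volume (K / P)).setIntegral_preimage_emb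
    (measurableEmbedding_addRight (K / P))
    (fun u : ℝ => u ^ (-(M : ℝ)) * Real.exp (-u)) (Set.Ioi (K / P))
  simp only [Set.preimage_add_const_Ioi, sub_self] at h2
  simp only [mul_zero, zero_add, smul_eq_mul] at h1
  rw [h2] at h1
  have : ∀ a b c d e : ℝ, a * (b * (c * d * e)) = a * c * d * (b * e) := by intros; ring
  rw [this, ← h1, ← integral_const_mul]
  refine setIntegral_congr_fun measurableSet_Ioi fun s hs => ?_
  have hs' : 0 < s := hs
  have hu : 0 < K * s + K / P := by positivity
  rw [Real.rpow_neg hu.le, Real.rpow_natCast, neg_add, Real.exp_add, Real.exp_neg (K / P),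
    neg_mul, ← mul_pow, ← inv_pow]
  have e : Real.pi / (P⁻¹ + s) = (Real.pi * P * (K / P)) * (K * s + K / P)⁻¹ := by
    field_simp
    ring
  rw [e, mul_pow]
  have := (Real.exp_pos (K/P)).ne'
  field_simp

lemma aux_meas {M : ℕ} : Measurable (fun x : Fin M → ℂ => ∑ j, Complex.normSq (x j)) := by
  have : Continuous Complex.normSq := Complex.continuous_normSq
  fun_prop

/-- weight -/
noncomputable def auxf (M : ℕ) (P K : ℝ) (x : Fin M → ℂ) : ℝ :=
  Real.exp (-(∑ j, Complex.normSq (x j)) / P) / ((∑ j, Complex.normSq (x j)) + K)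

lemma auxf_nonneg {M : ℕ} {P K : ℝ} (hK : 0 < K) (x : Fin M → ℂ) : 0 ≤ auxf M P K x := by
  have hR := aux_R_nonneg x
  unfold auxf
  positivity

lemma auxf_meas {M : ℕ} {P K : ℝ} : Measurable (auxf M P K) := by
  have := @aux_meas M
  unfold auxf
  fun_prop

lemma aux_expint {M : ℕ} {P : ℝ} (hP : 0 < P) :
    Integrable (fun x : Fin M → ℂ => Real.exp (-(∑ j, Complex.normSq (x j)) / P)) := by
  refine (aux_int_exp (M := M) (c := P⁻¹) (by positivity)).congr
    (Filter.Eventually.of_forall fun x => ?_)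
  simp only
  congr 1
  ring

lemma aux_dom {M : ℕ} {P K : ℝ} (hP : 0 < P) (hK : 0 < K) (g : (Fin M → ℂ) → ℝ)
    (hg : Measurable g) (C : ℝ) (hb : ∀ x, |g x| ≤ C * ((∑ j, Complex.normSq (x j)) + K)) :
    Integrable (fun x => g x * auxf M P K x) := by
  refine ((aux_expint (M := M) hP).const_mul C).mono' (hg.mul auxf_meas).aestronglyMeasurable
    (Filter.Eventually.of_forall fun x => ?_)
  have hR := aux_R_nonneg x
  have hf := auxf_nonneg (P := P) hK x
  rw [Real.norm_eq_abs, abs_mul, abs_of_nonneg hf]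
  refine (mul_le_mul_of_nonneg_right (hb x) hf).trans_eq ?_
  unfold auxf
  field_simp

lemma aux_int_cross {M : ℕ} {P K : ℝ} (hP : 0 < P) (hK : 0 < K) (c : ℂ) (j k : Fin M) :
    Integrable (fun x => (c * (x j * (starRingEnd ℂ) (x k))).re * auxf M P K x) := by
  refine aux_dom hP hK _ ?_ ‖c‖ fun x => ?_
  · apply Continuous.measurable
    fun_prop
  · refine (Complex.abs_re_le_norm _).trans ?_
    rw [norm_mul, norm_mul, RCLike.norm_conj]
    gcongr
    have h1 : Complex.normSq (x j) ≤ ∑ j, Complex.normSq (x j) :=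
      Finset.single_le_sum (f := fun j => Complex.normSq (x j))
        (fun _ _ => Complex.normSq_nonneg _) (Finset.mem_univ j)
    have h2 : Complex.normSq (x k) ≤ ∑ j, Complex.normSq (x j) :=
      Finset.single_le_sum (f := fun j => Complex.normSq (x j))
        (fun _ _ => Complex.normSq_nonneg _) (Finset.mem_univ k)
    rw [Complex.normSq_eq_norm_sq] at h1 h2
    nlinarith [sq_nonneg (‖x j‖ - ‖x k‖)]

lemma aux_cross {M : ℕ} {P K : ℝ} (c : ℂ) (j k : Fin M) (hjk : j ≠ k) :
    ∫ x, (c * (x j * (starRingEnd ℂ) (x k))).re * auxf M P K x = 0 := by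
  let φ : (Fin M → ℂ) → (Fin M → ℂ) := fun x i => if i = j then - x i else x i
  have hinv : Function.Involutive φ := by
    intro x
    ext i
    by_cases h : i = j <;> simp [φ, h]
  have hmp : MeasurePreserving φ volume volume := by
    refine volume_preserving_pi (f := fun i z => if i = j then -z else z) fun i => ?_
    by_cases h : i = j
    · simp only [h, if_true]
      exact Measure.measurePreserving_neg volume
    · simp only [h, if_false]
      exact MeasurePreserving.id _
  have hme : MeasurableEmbedding φ :=
    (MeasurableEquiv.ofInvolutive φ hinv hmp.measurable).measurableEmbedding
  have h := hmp.integral_comp hme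
    (fun x => (c * (x j * (starRingEnd ℂ) (x k))).re * auxf M P K x)
  have hn : ∀ x i, Complex.normSq (φ x i) = Complex.normSq (x i) := by
    intro x i
    by_cases h : i = j <;> simp [φ, h]
  have hf : ∀ x, auxf M P K (φ x) = auxf M P K x := by
    intro x
    simp only [auxf, hn]
  have h1 : ∀ x, φ x j = - x j := by intro x; simp [φ]
  have h2 : ∀ x, φ x k = x k := by intro x; simp [φ, hjk.symm]
  simp only [hf, h1, h2, neg_mul, mul_neg, Complex.neg_re] at h
  rw [integral_neg] at h
  linarith

lemma aux_diag {M : ℕ} {P K : ℝ} (j k : Fin M) :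
    ∫ x, Complex.normSq (x j) * auxf M P K x = ∫ x, Complex.normSq (x k) * auxf M P K x := by
  have hmp := volume_measurePreserving_piCongrLeft (fun _ : Fin M => ℂ) (Equiv.swap j k)
  have h := hmp.integral_comp' (fun x => Complex.normSq (x j) * auxf M P K x)
  rw [← h]
  have hv : ∀ (x : Fin M → ℂ) i, MeasurableEquiv.piCongrLeft (fun _ : Fin M => ℂ)
      (Equiv.swap j k) x i = x (Equiv.swap j k i) := by
    intro x i
    rw [MeasurableEquiv.coe_piCongrLeft]
    have := Equiv.piCongrLeft_apply_apply (fun _ : Fin M => ℂ) (Equiv.swap j k) x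
      (Equiv.swap j k i)
    simpa using this
  congr 1
  ext x
  simp only [auxf, hv]
  rw [Equiv.sum_comp (Equiv.swap j k) (fun i => Complex.normSq (x i))]
  simp

lemma aux_normSq {M : ℕ} (a x : Fin M → ℂ) : Complex.normSq (∑ j, a j * x j) =
    ∑ j, ∑ k, ((a j * (starRingEnd ℂ) (a k)) * (x j * (starRingEnd ℂ) (x k))).re := by
  have h : (Complex.normSq (∑ j, a j * x j) : ℂ) =
    ∑ j, ∑ k, ((a j * (starRingEnd ℂ) (a k)) * (x j * (starRingEnd ℂ) (x k))) := by
    rw [Complex.normSq_eq_conj_mul_self, mul_comm, map_sum, Finset.sum_mul_sum]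
    refine Finset.sum_congr rfl fun j _ => Finset.sum_congr rfl fun k _ => ?_
    rw [map_mul]
    ring
  have h' := congrArg Complex.re h
  simpa only [Complex.ofReal_re, Complex.re_sum] using h'

lemma aux_diag_re (c z : ℂ) : ((c * (starRingEnd ℂ) c) * (z * (starRingEnd ℂ) z)).re =
    Complex.normSq c * Complex.normSq z := by
  rw [Complex.mul_conj, Complex.mul_conj, ← Complex.ofReal_mul, Complex.ofReal_re]

lemma aux_int_row {M : ℕ} {P K : ℝ} (hP : 0 < P) (hK : 0 < K) (a : Fin M → ℂ) :
    Integrable (fun x => Complex.normSq (∑ j, a j * x j) * auxf M P K x) := by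
  simp_rw [aux_normSq, Finset.sum_mul]
  exact integrable_finsetSum _ fun j _ => integrable_finsetSum _ fun k _ =>
    aux_int_cross hP hK _ j k

lemma aux_row {M : ℕ} {P K : ℝ} (hP : 0 < P) (hK : 0 < K) (a : Fin M → ℂ) (j0 : Fin M) :
    ∫ x, Complex.normSq (∑ j, a j * x j) * auxf M P K x =
      (∑ j, Complex.normSq (a j)) * ∫ x, Complex.normSq (x j0) * auxf M P K x := by
  simp_rw [aux_normSq, Finset.sum_mul]
  rw [integral_finsetSum _ fun j _ => integrable_finsetSum _ fun k _ =>
    aux_int_cross hP hK _ j k]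
  refine Finset.sum_congr rfl fun j _ => ?_
  rw [integral_finsetSum _ fun k _ => aux_int_cross hP hK _ j k]
  rw [Finset.sum_eq_single j]
  · simp_rw [aux_diag_re, mul_assoc]
    rw [integral_const_mul, aux_diag j j0]
  · intro k _ hk
    exact aux_cross _ j k hk.symm
  · simp

lemma aux_intsq {M : ℕ} {P K : ℝ} (hP : 0 < P) (hK : 0 < K) (j : Fin M) :
    Integrable (fun x => Complex.normSq (x j) * auxf M P K x) := by
  have := aux_int_cross hP hK 1 j j
  simpa only [one_mul, Complex.mul_conj, Complex.ofReal_re] using this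

lemma aux_intf {M : ℕ} {P K : ℝ} (hP : 0 < P) (hK : 0 < K) :
    Integrable (fun x => auxf M P K x) := by
  have := aux_dom (M := M) hP hK (fun _ => 1) measurable_const K⁻¹ (fun x => by
    have hR := aux_R_nonneg x
    rw [abs_one, mul_add, inv_mul_cancel₀ hK.ne']
    have : 0 ≤ K⁻¹ * ∑ j, Complex.normSq (x j) := by positivity
    linarith)
  simpa only [one_mul] using this

lemma aux_sq_val {M : ℕ} {P K : ℝ} (hP : 0 < P) (hK : 0 < K) (j0 : Fin M) :
    (M : ℝ) * ∫ x, Complex.normSq (x j0) * auxf M P K x =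
      (Real.pi * P) ^ M - K * ∫ x, auxf M P K x := by
  have h1 : ∑ j : Fin M, ∫ x, Complex.normSq (x j) * auxf M P K x =
      (M : ℝ) * ∫ x, Complex.normSq (x j0) * auxf M P K x := by
    rw [Finset.sum_congr rfl fun j _ => aux_diag j j0]
    simp
  rw [← h1, ← integral_finsetSum _ fun j _ => aux_intsq hP hK j]
  have h2 : ∫ x : Fin M → ℂ, Real.exp (-(∑ j, Complex.normSq (x j)) / P) =
      (Real.pi * P) ^ M := by
    have := aux_val_exp (M := M) (c := P⁻¹) (by positivity)
    rw [div_inv_eq_mul] at this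
    rw [← this]
    congr 1
    ext x
    congr 1
    ring
  rw [← h2, ← integral_const_mul, ← integral_sub (aux_expint hP) ((aux_intf hP hK).const_mul K)]
  congr 1
  ext x
  have hR := aux_R_nonneg x
  rw [← Finset.sum_mul]
  unfold auxf
  field_simp
  ring


/-- Lemma 1 of the paper: for `X ~ CN(0, P̄ I)` in `ℂ^{M_T}` and `K₁, K₂ > 0`,
with `n = M_T - 1`,
`E[(‖AX‖² + K₁)/(‖X‖² + K₂)] = ‖A‖_F²/(n+1) + (K₁/K₂ - ‖A‖_F²/(n+1))
 (K₂/P̄)^{n+1} e^{K₂/P̄} Γ(-n, K₂/P̄)`. -/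
theorem expectation_ratio_quadratic_forms (MR MT : ℕ) (hMT : 1 ≤ MT)
    (A : Matrix (Fin MR) (Fin MT) ℂ) (P K1 K2 : ℝ)
    (hP : 0 < P) (hK1 : 0 < K1) (hK2 : 0 < K2) :
    (∫ x : Fin MT → ℂ,
        ((Real.pi * P) ^ MT)⁻¹ * Real.exp (-(∑ j, Complex.normSq (x j)) / P) *
          (((∑ i, Complex.normSq (∑ j, A i j * x j)) + K1) /
            ((∑ j, Complex.normSq (x j)) + K2))) =
      (∑ i, ∑ j, Complex.normSq (A i j)) / MT +
        (K1 / K2 - (∑ i, ∑ j, Complex.normSq (A i j)) / MT) * (K2 / P) ^ MT *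
          Real.exp (K2 / P) *
          ∫ u in Set.Ioi (K2 / P), u ^ (-(MT : ℝ)) * Real.exp (-u) := by
  have j0 : Fin MT := ⟨0, hMT⟩
  have e : ∀ x : Fin MT → ℂ, ((Real.pi * P) ^ MT)⁻¹ *
      Real.exp (-(∑ j, Complex.normSq (x j)) / P) *
          (((∑ i, Complex.normSq (∑ j, A i j * x j)) + K1) /
            ((∑ j, Complex.normSq (x j)) + K2)) =
      ((Real.pi * P) ^ MT)⁻¹ * ((∑ i, Complex.normSq (∑ j, A i j * x j) * auxf MT P K2 x) +
        K1 * auxf MT P K2 x) := by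
    intro x
    rw [← Finset.sum_mul]
    unfold auxf
    ring
  simp_rw [e]
  rw [integral_const_mul, integral_add
    (integrable_finsetSum _ fun i _ => aux_int_row hP hK2 (A i))
    ((aux_intf hP hK2).const_mul K1),
    integral_finsetSum _ fun i _ => aux_int_row hP hK2 (A i), integral_const_mul,
    Finset.sum_congr rfl fun i _ => aux_row hP hK2 (A i) j0, ← Finset.sum_mul]
  have hs := aux_sq_val hP hK2 j0
  have hI : ∫ x, auxf MT P K2 x = _ := (aux_I0 (M := MT) hP hK2).trans (aux_subst hP hK2)
  have hM : (MT : ℝ) ≠ 0 := by positivity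
  have hs' := (eq_div_iff hM).2 ((mul_comm _ _).trans hs)
  rw [hs', hI]
  have hq : (Real.pi * P) ^ MT ≠ 0 := by positivity
  generalize (Real.pi * P) ^ MT = q at *
  generalize (∫ u in Set.Ioi (K2 / P), u ^ (-(MT : ℝ)) * Real.exp (-u)) = J
  generalize (∑ i, ∑ j, Complex.normSq (A i j)) = F
  generalize (K2 / P) ^ MT = w
  generalize Real.exp (K2 / P) = v
  field_simp
  ring
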